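/- Let k ∈ {0,1}, let F : ℝ × ℝ^{d+1} → ℝ be C¹ with F(0,0) = 0, and let f, g ∈ ℓ^{2,k}(ℤ^d). Consider the semilinear wave equation ∂_t² u − Δu = F(u,u') on ℤ^d with small initial data u(·,0) = εf, ∂_t u(·,0) = εg. Then there exist δ > 0 and a constant K > 0 (depending on f, g, d, F) such that for every 0 < ε < δ the maximal existence time satisfies T*(ε) ≥ K·√(log(1/ε)). -/

import Mathlib

/-!
Conjugating by the weight `⟨m⟩ᵏ` turns the lattice wave equation into an ordinary differential
equation `x' = G x` for a pair `x = (a, b)` in `ℓ² × ℓ²`. On `ℓ^{2,k}` both `Δ` and `∂ⱼ` are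
bounded: the only delicate case is `∂ⱼ` with `k = 1`, where the conjugated kernel decays merely
like `1 / a` and one needs a Schur test in which `|K|²`, not `|K|`, is split into two factors with
summable rows and columns. Since `F` is Lipschitz near the origin, it agrees there with a globally
Lipschitz function; with this replacement `G` is globally Lipschitz and `G 0 = 0`, so solutions
are global and Grönwall's inequality gives `‖x t‖ ≤ ε ‖x 0‖ exp (L t)` for data of size `ε`. Up to
the time `log (1 / ε) / (2 L)` the right-hand side is `O(√ε)`, so the solution stays where `F` was
not modified.
-/

open scoped BigOperators ENNReal NNReal
open MeasureTheory Filter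

noncomputable section

/-- Kernel `φⱼ` of the discrete partial derivative on `ℤ^d`:
`φⱼ(m) = -4i/(π(4a²-1))` if `m = a·eⱼ`, and `0` otherwise. -/
def phi (d : ℕ) (j : Fin d) (m : Fin d → ℤ) : ℂ :=
  if ∀ i, i ≠ j → m i = 0 then
    (-4 * Complex.I) / ((Real.pi : ℂ) * (4 * (m j : ℂ) ^ 2 - 1))
  else 0

/-- Discrete convolution on `ℤ^d`. -/
def dconv {d : ℕ} (u v : (Fin d → ℤ) → ℂ) (k : Fin d → ℤ) : ℂ :=
  ∑' m, u m * v (k - m)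

/-- Discrete partial derivative `∂ⱼ u = u ∗ φⱼ`. -/
def pd {d : ℕ} (j : Fin d) (u : (Fin d → ℤ) → ℂ) : (Fin d → ℤ) → ℂ :=
  dconv u (phi d j)

/-- Japanese bracket `⟨m⟩ = (1+|m|²)^{1/2}`. -/
def jap {d : ℕ} (m : Fin d → ℤ) : ℝ :=
  Real.sqrt (1 + ∑ i, ((m i : ℝ)) ^ 2)

open scoped Classical in
/-- `ℓ^p` norm on `ℤ^d` (valued in `ℝ≥0∞`), `1 ≤ p ≤ ∞`. -/
def lpn {d : ℕ} (p : ℝ≥0∞) (f : (Fin d → ℤ) → ℂ) : ℝ≥0∞ :=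
  if p = ⊤ then ⨆ m, (‖f m‖₊ : ℝ≥0∞)
  else (∑' m, (‖f m‖₊ : ℝ≥0∞) ^ p.toReal) ^ (1 / p.toReal)

/-- Weighted `ℓ^{2,k}` norm: the `ℓ²` norm of `m ↦ ⟨m⟩^k f(m)`. -/
def w2 {d : ℕ} (k : ℕ) (f : (Fin d → ℤ) → ℂ) : ℝ≥0∞ :=
  lpn 2 (fun m => ((jap m ^ k : ℝ) : ℂ) * f m)

/-- Discrete Laplacian on `ℤ^d`. -/
def lap {d : ℕ} (u : (Fin d → ℤ) → ℂ) (x : Fin d → ℤ) : ℂ :=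
  ∑ j, (u (x + Pi.single j 1) + u (x - Pi.single j 1) - 2 * u x)

/-- Continuity of a curve `t ↦ f(·,t)` into `ℓ^{2,k}(ℤ^d)` on a set `S` of times. -/
def ContW {d : ℕ} (k : ℕ) (S : Set ℝ) (f : ℝ → (Fin d → ℤ) → ℂ) : Prop :=
  ∀ t ∈ S, Tendsto (fun s => w2 k (fun m => f s m - f t m))
    (nhdsWithin t S) (nhds (0 : ℝ≥0∞))

/-- `f'` is the derivative (in the `ℓ^{2,k}(ℤ^d)` norm) of the curve `t ↦ f(·,t)` on `S`. -/
def DerivW {d : ℕ} (k : ℕ) (S : Set ℝ) (f f' : ℝ → (Fin d → ℤ) → ℂ) : Prop :=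
  ∀ t ∈ S, Tendsto
    (fun s => w2 k (fun m => (s - t)⁻¹ • (f s m - f t m) - f' t m))
    (nhdsWithin t (S \ {t})) (nhds (0 : ℝ≥0∞))

/-- `u ∈ C²(S; ℓ^{2,k}(ℤ^d))`, with first and second time derivatives `u1`, `u2`. -/
structure IsC2 {d : ℕ} (k : ℕ) (S : Set ℝ) (u u1 u2 : ℝ → (Fin d → ℤ) → ℂ) : Prop where
  mem0 : ∀ t ∈ S, w2 k (u t) < ⊤
  mem1 : ∀ t ∈ S, w2 k (u1 t) < ⊤
  mem2 : ∀ t ∈ S, w2 k (u2 t) < ⊤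
  cont0 : ContW k S u
  cont1 : ContW k S u1
  cont2 : ContW k S u2
  hder1 : DerivW k S u u1
  hder2 : DerivW k S u1 u2

/-- The pointwise state `(u, u') = (u, ∂ₜu, ∂₁u, …, ∂_d u)` of a solution. -/
def state {d : ℕ} (u u1 : ℝ → (Fin d → ℤ) → ℂ) (t : ℝ) (x : Fin d → ℤ) :
    ℂ × (Fin (d + 1) → ℂ) :=
  (u t x, Fin.cons (u1 t x) fun i => pd i (u t) x)

/-- `u` (with time derivatives `u1`, `u2`) is a classical solution in
`C²(S; ℓ^{2,k}(ℤ^d))` of the semilinear wave equation `∂ₜ²u - Δu = F(u,u')`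
with data `u(·,0)=f`, `∂ₜu(·,0)=g`. -/
def SLSol (d k : ℕ) (F : ℂ × (Fin (d + 1) → ℂ) → ℂ) (f g : (Fin d → ℤ) → ℂ)
    (S : Set ℝ) (u u1 u2 : ℝ → (Fin d → ℤ) → ℂ) : Prop :=
  IsC2 k S u u1 u2 ∧
    (∀ t ∈ S, ∀ x, u2 t x - lap (u t) x = F (state u u1 t x)) ∧
    (∀ x, u 0 x = f x) ∧ (∀ x, u1 0 x = g x)

open scoped lp Topology

/-! ### Operators on `ℓ^p` spaces -/

section SquareSummable

variable {ι κ : Type*} {E : ι → Type*} [∀ i, NormedAddCommGroup (E i)]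

lemma memℓp_two_iff_tsum_enorm_sq_lt_top {f : ∀ i, E i} :
    Memℓp f 2 ↔ ∑' i, ‖f i‖ₑ ^ 2 < ⊤ := by
  have hcoe (i) : ‖f i‖ₑ ^ 2 = ((‖f i‖₊ ^ 2 : ℝ≥0) : ℝ≥0∞) := by simp [enorm_eq_nnnorm]
  simp_rw [hcoe, lt_top_iff_ne_top, ENNReal.tsum_coe_ne_top_iff_summable, ← NNReal.summable_coe]
  simpa using memℓp_gen_iff (f := f) (p := 2) (by norm_num)

lemma lp_two_enorm_sq_eq_tsum (f : lp E 2) : ‖f‖ₑ ^ 2 = ∑' i, ‖f i‖ₑ ^ 2 := by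
  have hf : HasSum (fun i => ‖f i‖ ^ 2) (‖f‖ ^ 2) := by
    simpa using lp.hasSum_norm (p := 2) (by norm_num) f
  simp_rw [← ofReal_norm, ← ENNReal.ofReal_pow (norm_nonneg _), ← hf.tsum_eq]
  exact ENNReal.ofReal_tsum_of_nonneg (fun _ => by positivity) hf.summable

lemma tsum_sq_le_tsum_mul_tsum_of_sq_le_mul {f g h : ι → ℝ≥0∞}
    (hfg : ∀ i, h i ^ 2 ≤ f i * g i) : (∑' i, h i) ^ 2 ≤ (∑' i, f i) * ∑' i, g i := by
  let _ : MeasurableSpace ι := ⊤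
  have hsqrt {x y : ℝ≥0∞} (hxy : x ^ 2 ≤ y) : x ≤ y ^ (1 / 2 : ℝ) := by
    calc x = (x ^ 2) ^ (1 / 2 : ℝ) := by
          rw [← ENNReal.rpow_natCast, ← ENNReal.rpow_mul]; norm_num
      _ ≤ y ^ (1 / 2 : ℝ) := by gcongr
  calc (∑' i, h i) ^ 2 ≤ (∑' i, f i ^ (1 / 2 : ℝ) * g i ^ (1 / 2 : ℝ)) ^ 2 := by
        gcongr with i
        rw [← ENNReal.mul_rpow_of_nonneg _ _ (by norm_num)]
        exact hsqrt (hfg i)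
    _ ≤ ((∑' i, f i) ^ (1 / 2 : ℝ) * (∑' i, g i) ^ (1 / 2 : ℝ)) ^ 2 := by
        gcongr
        simpa only [lintegral_count] using ENNReal.lintegral_mul_norm_pow_le (μ := Measure.count)
          (measurable_from_top (f := f)).aemeasurable (measurable_from_top (f := g)).aemeasurable
          (p := 1 / 2) (q := 1 / 2) (by norm_num) (by norm_num) (by norm_num)
    _ = (∑' i, f i) * ∑' i, g i := by
        rw [← ENNReal.mul_rpow_of_nonneg _ _ (by norm_num), ← ENNReal.rpow_mul_natCast]
        norm_num

lemma tsum_sq_tsum_mul_le {K α β : ι → κ → ℝ≥0∞} {A B : ℝ≥0∞}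
    (hK : ∀ i j, K i j ^ 2 ≤ α i j * β i j) (hα : ∀ i, ∑' j, α i j ≤ A)
    (hβ : ∀ j, ∑' i, β i j ≤ B) (x : κ → ℝ≥0∞) :
    ∑' i, (∑' j, K i j * x j) ^ 2 ≤ A * B * ∑' j, x j ^ 2 := by
  have hrow (i) : (∑' j, K i j * x j) ^ 2 ≤ A * ∑' j, β i j * x j ^ 2 :=
    calc (∑' j, K i j * x j) ^ 2 ≤ (∑' j, α i j) * ∑' j, β i j * x j ^ 2 :=
          tsum_sq_le_tsum_mul_tsum_of_sq_le_mul fun j => by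
            rw [mul_pow, ← mul_assoc]; gcongr; exact hK i j
      _ ≤ A * ∑' j, β i j * x j ^ 2 := by gcongr; exact hα i
  calc ∑' i, (∑' j, K i j * x j) ^ 2 ≤ ∑' i, A * ∑' j, β i j * x j ^ 2 := ENNReal.tsum_le_tsum hrow
    _ = A * ∑' j, (∑' i, β i j) * x j ^ 2 := by
        rw [ENNReal.tsum_mul_left, ENNReal.tsum_comm]
        simp_rw [ENNReal.tsum_mul_right]
    _ ≤ A * ∑' j, B * x j ^ 2 := by gcongr with j; exact hβ j
    _ = A * B * ∑' j, x j ^ 2 := by rw [ENNReal.tsum_mul_left, mul_assoc]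

theorem exists_clm_of_schur {𝕜 : Type*} [RCLike 𝕜] {K : ι → κ → 𝕜} {α β : ι → κ → ℝ≥0}
    {A B : ℝ≥0} (hK : ∀ i j, ‖K i j‖₊ ^ 2 ≤ α i j * β i j)
    (hα : ∀ i, ∑' j, (α i j : ℝ≥0∞) ≤ A) (hβ : ∀ j, ∑' i, (β i j : ℝ≥0∞) ≤ B) :
    ∃ T : ℓ²(κ, 𝕜) →L[𝕜] ℓ²(ι, 𝕜), ∀ a i, T a i = ∑' j, K i j * a j := by
  have htotal (a : ℓ²(κ, 𝕜)) : ∑' i, (∑' j, ‖K i j * a j‖ₑ) ^ 2 ≤ A * B * ‖a‖ₑ ^ 2 := by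
    simp_rw [lp_two_enorm_sq_eq_tsum, enorm_mul]
    exact tsum_sq_tsum_mul_le (K := fun i j => ‖K i j‖ₑ) (fun i j => by
      simp only [enorm_eq_nnnorm]; exact_mod_cast hK i j) hα hβ fun j => ‖a j‖ₑ
  have hfinite (a : ℓ²(κ, 𝕜)) : (A * B * ‖a‖ₑ ^ 2 : ℝ≥0∞) < ⊤ :=
    ENNReal.mul_lt_top (by finiteness) (by finiteness)
  have hsummable (a : ℓ²(κ, 𝕜)) (i) : Summable fun j => K i j * a j := by
    have hi : ∑' j, ‖K i j * a j‖ₑ ≠ ⊤ := by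
      simpa using ENNReal.ne_top_of_tsum_ne_top ((htotal a).trans_lt (hfinite a)).ne i
    exact .of_nnnorm (ENNReal.tsum_coe_ne_top_iff_summable.1 hi)
  have hbound (a : ℓ²(κ, 𝕜)) : ∑' i, ‖∑' j, K i j * a j‖ₑ ^ 2 ≤ A * B * ‖a‖ₑ ^ 2 :=
    (ENNReal.tsum_le_tsum fun i => by gcongr; exact enorm_tsum_le_tsum_enorm).trans (htotal a)
  let T : ℓ²(κ, 𝕜) →ₗ[𝕜] ℓ²(ι, 𝕜) :=
    { toFun := fun a => ⟨fun i => ∑' j, K i j * a j,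
        memℓp_two_iff_tsum_enorm_sq_lt_top.2 ((hbound a).trans_lt (hfinite a))⟩
      map_add' := fun a b => by
        ext i
        change ∑' j, K i j * (a j + b j) = ∑' j, K i j * a j + ∑' j, K i j * b j
        simp_rw [mul_add]
        exact (hsummable a i).tsum_add (hsummable b i)
      map_smul' := fun c a => by
        ext i
        change ∑' j, K i j * (c * a j) = c * ∑' j, K i j * a j
        simp_rw [mul_left_comm _ c]
        exact tsum_mul_left }
  refine ⟨T.mkContinuous (NNReal.sqrt (A * B)) fun a => ?_, fun _ _ => rfl⟩
  have hT : ‖T a‖₊ ^ 2 ≤ A * B * ‖a‖₊ ^ 2 := by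
    have h := (lp_two_enorm_sq_eq_tsum (T a)).trans_le (hbound a)
    simp only [enorm_eq_nnnorm] at h
    exact_mod_cast h
  have hsqrt := NNReal.sqrt_le_sqrt.2 hT
  rw [NNReal.sqrt_mul, NNReal.sqrt_sq, NNReal.sqrt_sq] at hsqrt
  exact hsqrt

end SquareSummable

section Pointwise

variable {ι : Type*} {p : ℝ≥0∞} [Fact (1 ≤ p)]

lemma exists_lipschitzWith_lp_map {E F : ι → Type*} [∀ i, NormedAddCommGroup (E i)]
    [∀ i, NormedAddCommGroup (F i)] {Ψ : ∀ i, E i → F i} {c : ℝ≥0}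
    (hΨ : ∀ i, LipschitzWith c (Ψ i)) (hΨ0 : ∀ i, Ψ i 0 = 0) :
    ∃ N : lp E p → lp F p, LipschitzWith c N ∧ ∀ v i, N v i = Ψ i (v i) := by
  have hp : p ≠ 0 := (zero_lt_one.trans_le (Fact.out : 1 ≤ p)).ne'
  have hmem (v : lp E p) : Memℓp (fun i => Ψ i (v i)) p :=
    (lp.memℓp ((c : ℝ) • lp.toNorm v)).mono fun i => by
      simpa [hΨ0 i] using (hΨ i).norm_sub_le (v i) 0
  refine ⟨fun v => ⟨_, hmem v⟩, LipschitzWith.of_dist_le_mul fun v w => ?_, fun _ _ => rfl⟩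
  rw [dist_eq_norm, dist_eq_norm]
  calc _ ≤ ‖(c : ℝ) • lp.toNorm (v - w)‖ := lp.norm_mono hp fun i => by
        change ‖Ψ i (v i) - Ψ i (w i)‖ ≤ _
        simpa using (hΨ i).norm_sub_le (v i) (w i)
    _ = c * ‖v - w‖ := by simp [lp.norm_const_smul hp, lp.norm_toNorm]

lemma exists_clm_lp_map {𝕜 E F : Type*} [NontriviallyNormedField 𝕜] [NormedAddCommGroup E]
    [NormedSpace 𝕜 E] [NormedAddCommGroup F] [NormedSpace 𝕜 F] (T : E →L[𝕜] F) :
    ∃ N : ℓ^p(ι, E) →L[𝕜] ℓ^p(ι, F), ∀ v i, N v i = T (v i) := by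
  obtain ⟨N, hN, hNT⟩ :=
    exists_lipschitzWith_lp_map (ι := ι) (p := p) (fun _ => T.lipschitz) fun _ => map_zero T
  exact ⟨{ toFun := N
           map_add' := fun v w => by ext i; simp [hNT]
           map_smul' := fun c v => by ext i; simp [hNT]
           cont := hN.continuous }, hNT⟩

section

variable {𝕜 X F F' κ : Type*} [NontriviallyNormedField 𝕜] [NormedAddCommGroup X] [NormedSpace 𝕜 X]
  [NormedAddCommGroup F] [NormedSpace 𝕜 F] [NormedAddCommGroup F'] [NormedSpace 𝕜 F']

lemma exists_clm_lp_prodMk (S : X →L[𝕜] ℓ^p(ι, F)) (T : X →L[𝕜] ℓ^p(ι, F')) :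
    ∃ N : X →L[𝕜] ℓ^p(ι, F × F'), ∀ x i, N x i = (S x i, T x i) := by
  obtain ⟨fst, hfst⟩ := exists_clm_lp_map (ι := ι) (p := p) (.inl 𝕜 F F')
  obtain ⟨snd, hsnd⟩ := exists_clm_lp_map (ι := ι) (p := p) (.inr 𝕜 F F')
  exact ⟨fst ∘L S + snd ∘L T, fun x i => by simp [hfst, hsnd]⟩

lemma exists_clm_lp_pi [Fintype κ] (T : κ → X →L[𝕜] ℓ^p(ι, F)) :
    ∃ N : X →L[𝕜] ℓ^p(ι, κ → F), ∀ x i j, N x i j = T j x i := by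
  classical
  choose single hsingle using fun j =>
    exists_clm_lp_map (ι := ι) (p := p) (.single 𝕜 (fun _ : κ => F) j)
  refine ⟨∑ j, single j ∘L T j, fun x i j => ?_⟩
  have hsum : (∑ j, single j (T j x)) i = ∑ j, single j (T j x) i := by
    rw [lp.coeFn_sum]
    exact Finset.sum_apply i _ _
  simp only [sum_apply, ContinuousLinearMap.comp_apply]
  rw [hsum]
  simp [hsingle, Pi.single_apply]

end

end Pointwise

/-! ### Ordinary differential equations with Lipschitz right-hand side -/

section ODE

variable {E : Type*} [NormedAddCommGroup E] [NormedSpace ℝ E]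

/-- The radial retraction of a normed space onto its closed ball of radius `R > 0`, used to make a
Lipschitz vector field bounded. -/
def ballRetraction (R : ℝ) (x : E) : E :=
  (R / max R ‖x‖) • x

lemma ballRetraction_of_norm_le {R : ℝ} (hR : 0 < R) {x : E} (hx : ‖x‖ ≤ R) :
    ballRetraction R x = x := by
  rw [ballRetraction, max_eq_left hx, div_self hR.ne', one_smul]

lemma norm_ballRetraction {R : ℝ} (hR : 0 < R) (x : E) :
    ‖ballRetraction R x‖ = R / max R ‖x‖ * ‖x‖ := by
  rw [ballRetraction, norm_smul, Real.norm_of_nonneg (by positivity)]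

lemma norm_ballRetraction_le_radius {R : ℝ} (hR : 0 < R) (x : E) : ‖ballRetraction R x‖ ≤ R := by
  rw [norm_ballRetraction hR, div_mul_eq_mul_div, div_le_iff₀ (by positivity)]
  gcongr
  exact le_max_right _ _

lemma norm_ballRetraction_le_norm {R : ℝ} (hR : 0 < R) (x : E) : ‖ballRetraction R x‖ ≤ ‖x‖ := by
  rw [norm_ballRetraction hR]
  exact mul_le_of_le_one_left (norm_nonneg x) (div_le_one_of_le₀ (le_max_left _ _) (by positivity))

lemma lipschitzWith_ballRetraction {R : ℝ} (hR : 0 < R) :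
    LipschitzWith 2 (ballRetraction R : E → E) := by
  refine LipschitzWith.of_dist_le_mul fun x y => ?_
  rw [dist_eq_norm, dist_eq_norm]
  set M := max R ‖x‖ with hM
  set N := max R ‖y‖ with hN
  have hM0 : 0 < M := lt_max_of_lt_left hR
  have hN0 : 0 < N := lt_max_of_lt_left hR
  have hNM : |N - M| ≤ ‖x - y‖ :=
    (abs_max_sub_max_le_max R ‖y‖ R ‖x‖).trans <| by
      simpa [norm_sub_rev x y] using abs_norm_sub_norm_le y x
  have hfirst : ‖(R / M) • (x - y)‖ ≤ ‖x - y‖ := by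
    rw [norm_smul, Real.norm_of_nonneg (by positivity)]
    exact mul_le_of_le_one_left (norm_nonneg _) (div_le_one_of_le₀ (le_max_left _ _) hM0.le)
  have hsecond : ‖(R / M - R / N) • y‖ ≤ ‖x - y‖ :=
    calc ‖(R / M - R / N) • y‖ = |N - M| * ((R / M) * (‖y‖ / N)) := by
          have hdiff : R / M - R / N = (N - M) * (R / (M * N)) := by field_simp
          rw [norm_smul, hdiff, norm_mul, Real.norm_eq_abs, Real.norm_of_nonneg (by positivity)]
          field_simp
      _ ≤ |N - M| * (1 * 1) := by
          gcongr
          · exact div_le_one_of_le₀ (le_max_left _ _) hM0.le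
          · exact div_le_one_of_le₀ (le_max_right _ _) hN0.le
      _ ≤ ‖x - y‖ := by simpa using hNM
  calc ‖ballRetraction R x - ballRetraction R y‖
        = ‖(R / M) • (x - y) + (R / M - R / N) • y‖ := by
          simp only [ballRetraction, ← hM, ← hN, smul_sub, sub_smul]; abel_nf
    _ ≤ ‖x - y‖ + ‖x - y‖ := norm_add_le_of_le hfirst hsecond
    _ = (2 : ℝ≥0) * ‖x - y‖ := by push_cast; ring

variable [CompleteSpace E]

lemma exists_hasDerivWithinAt_Icc_of_bounded {G : E → E} {L C : ℝ≥0} (hG : LipschitzWith L G)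
    (hC : ∀ x, ‖G x‖ ≤ C) (x₀ : E) {T : ℝ} (hT : 0 ≤ T) :
    ∃ x : ℝ → E, x 0 = x₀ ∧
      ∀ t ∈ Set.Icc 0 T, HasDerivWithinAt x (G (x t)) (Set.Icc 0 T) t := by
  have hPL : IsPicardLindelof (fun _ => G) (tmin := 0) (tmax := T) ⟨0, le_rfl, hT⟩ x₀
      (C * T.toNNReal) 0 C L :=
    { lipschitzOnWith := fun _ _ => hG.lipschitzOnWith
      continuousOn := fun _ _ => continuousOn_const
      norm_le := fun _ _ x _ => hC x
      mul_max_le := by simp [hT] }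
  exact hPL.exists_eq_forall_mem_Icc_hasDerivWithinAt₀

theorem exists_hasDerivWithinAt_Icc_of_lipschitz {G : E → E} {L : ℝ≥0} (hG : LipschitzWith L G)
    (x₀ : E) {T : ℝ} (hT : 0 ≤ T) :
    ∃ x : ℝ → E, x 0 = x₀ ∧ ∀ t ∈ Set.Icc 0 T,
      HasDerivWithinAt x (G (x t)) (Set.Icc 0 T) t ∧ ‖x t‖ ≤ gronwallBound ‖x₀‖ L ‖G 0‖ t := by
  have hgrowth (y : E) : ‖G y‖ ≤ L * ‖y‖ + ‖G 0‖ := by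
    refine (norm_le_norm_sub_add (G y) (G 0)).trans ?_
    gcongr
    simpa using hG.norm_sub_le y 0
  have hmono : Monotone (gronwallBound ‖x₀‖ L ‖G 0‖) :=
    gronwallBound_mono (norm_nonneg _) (norm_nonneg _) L.coe_nonneg
  -- The solution of the retracted equation obeys the a priori bound of the original one, so with
  -- this radius it never leaves the ball on which the two equations agree.
  set R : ℝ := gronwallBound ‖x₀‖ L ‖G 0‖ T + 1
  have hR : 0 < R := by
    linarith [norm_nonneg x₀, gronwallBound_x0 ‖x₀‖ L ‖G 0‖, hmono hT]
  obtain ⟨x, hx0, hx⟩ := exists_hasDerivWithinAt_Icc_of_bounded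
    (C := L * ⟨R, hR.le⟩ + ‖G 0‖₊) (hG.comp (lipschitzWith_ballRetraction hR))
    (fun y => (hgrowth _).trans <| by
      change _ ≤ L * R + ‖G 0‖
      gcongr
      exact norm_ballRetraction_le_radius hR y) x₀ hT
  have hbound : ∀ t ∈ Set.Icc 0 T, ‖x t‖ ≤ gronwallBound ‖x₀‖ L ‖G 0‖ t := by
    simpa only [sub_zero] using norm_le_gronwallBound_of_norm_deriv_right_le
      (fun t ht => (hx t ht).continuousWithinAt)
      (fun t ht => (hx t ⟨ht.1, ht.2.le⟩).mono_of_mem_nhdsWithin (Icc_mem_nhdsGE_of_mem ht))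
      (by rw [hx0])
      (fun t _ => (hgrowth _).trans (by gcongr; exact norm_ballRetraction_le_norm hR _))
  refine ⟨x, hx0, fun t ht => ⟨?_, hbound t ht⟩⟩
  have hxR : ‖x t‖ ≤ R := (hbound t ht).trans <| (hmono ht.2).trans (by linarith)
  simpa [ballRetraction_of_norm_le hR hxR] using hx t ht

end ODE

/-! ### The weighted space `ℓ^{2,k}(ℤ^d)` -/

section Weight

variable {d k : ℕ}

lemma jap_sq (m : Fin d → ℤ) : jap m ^ 2 = 1 + ∑ i, (m i : ℝ) ^ 2 :=
  Real.sq_sqrt (by positivity)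

lemma one_add_sq_le_jap_sq (m : Fin d → ℤ) (j : Fin d) : 1 + (m j : ℝ) ^ 2 ≤ jap m ^ 2 := by
  rw [jap_sq]
  gcongr
  exact Finset.single_le_sum (f := fun i => (m i : ℝ) ^ 2) (fun _ _ => sq_nonneg _)
    (Finset.mem_univ j)

lemma one_le_jap (m : Fin d → ℤ) : 1 ≤ jap m :=
  Real.one_le_sqrt.2 (le_add_of_nonneg_right (by positivity))

lemma jap_pos (m : Fin d → ℤ) : 0 < jap m :=
  one_pos.trans_le (one_le_jap m)

lemma jap_sq_le_two_mul_add (m n : Fin d → ℤ) :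
    jap m ^ 2 ≤ 2 * (jap n ^ 2 + jap (m - n) ^ 2 - 1) := by
  have hsum : ∑ i, (m i : ℝ) ^ 2 ≤ 2 * (∑ i, (n i : ℝ) ^ 2 + ∑ i, ((m - n) i : ℝ) ^ 2) := by
    rw [← Finset.sum_add_distrib, Finset.mul_sum]
    gcongr with i
    push_cast [Pi.sub_apply]
    linarith [sq_nonneg ((n i : ℝ) - (m i - n i))]
  simp only [jap_sq]
  linarith

lemma jap_sq_le_two_mul_mul (m n : Fin d → ℤ) :
    jap m ^ 2 ≤ 2 * jap (m - n) ^ 2 * jap n ^ 2 := by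
  have hn : 1 ≤ jap n ^ 2 := one_le_pow₀ (one_le_jap n)
  have hmn : 1 ≤ jap (m - n) ^ 2 := one_le_pow₀ (one_le_jap (m - n))
  nlinarith [jap_sq_le_two_mul_add m n, mul_nonneg (sub_nonneg.2 hn) (sub_nonneg.2 hmn)]

/-- The isometry `a ↦ ⟨·⟩⁻ᵏ a` of `ℓ²(ℤ^d)` onto `ℓ^{2,k}(ℤ^d)`, through which the weighted space
inherits a Banach space structure. -/
def unweight (k : ℕ) : ℓ²(Fin d → ℤ, ℂ) →ₗ[ℂ] (Fin d → ℤ) → ℂ where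
  toFun a m := (jap m ^ k)⁻¹ • a m
  map_add' a b := by ext m; simp
  map_smul' c a := by ext m; simp [mul_left_comm]

lemma unweight_apply (a : ℓ²(Fin d → ℤ, ℂ)) (m : Fin d → ℤ) :
    unweight k a m = (jap m ^ k)⁻¹ • a m :=
  rfl

lemma w2_eq_tsum (f : (Fin d → ℤ) → ℂ) :
    w2 k f = (∑' m, ‖jap m ^ k • f m‖ₑ ^ 2) ^ (1 / 2 : ℝ) := by
  simp [w2, lpn, enorm_eq_nnnorm]

lemma w2_unweight (a : ℓ²(Fin d → ℤ, ℂ)) : w2 k (unweight k a) = ‖a‖ₑ := by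
  have hcancel (m) : jap m ^ k • unweight k a m = a m :=
    smul_inv_smul₀ (pow_pos (jap_pos m) k).ne' _
  simp_rw [w2_eq_tsum, hcancel, ← lp_two_enorm_sq_eq_tsum]
  rw [← ENNReal.rpow_natCast, ← ENNReal.rpow_mul]
  norm_num

lemma exists_unweight_eq {f : (Fin d → ℤ) → ℂ} (hf : w2 k f < ⊤) :
    ∃ a : ℓ²(Fin d → ℤ, ℂ), unweight k a = f := by
  rw [w2_eq_tsum, ENNReal.rpow_lt_top_iff_of_pos (by norm_num)] at hf
  exact ⟨⟨fun m => jap m ^ k • f m, memℓp_two_iff_tsum_enorm_sq_lt_top.2 hf⟩,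
    funext fun m => inv_smul_smul₀ (pow_pos (jap_pos m) k).ne' _⟩

variable {S : Set ℝ} {y y' y'' : ℝ → ℓ²(Fin d → ℤ, ℂ)}

lemma contW_unweight (hy : ContinuousOn y S) : ContW k S fun t => unweight k (y t) := by
  intro t ht
  refine (tendsto_iff_edist_tendsto_0.1 (hy t ht)).congr fun s => ?_
  rw [edist_eq_enorm_sub, ← w2_unweight (k := k), map_sub]
  rfl

lemma derivW_unweight (hy : ∀ t ∈ S, HasDerivWithinAt y (y' t) S t) :
    DerivW k S (fun t => unweight k (y t)) fun t => unweight k (y' t) := by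
  intro t ht
  have hslope := hasDerivWithinAt_iff_tendsto_slope.1 (hy t ht)
  refine (tendsto_iff_edist_tendsto_0.1 hslope).congr fun s => ?_
  rw [edist_eq_enorm_sub, ← w2_unweight (k := k), slope_def_module, map_sub,
    LinearMap.map_smul_of_tower, map_sub]
  rfl

lemma isC2_unweight (hy : ∀ t ∈ S, HasDerivWithinAt y (y' t) S t)
    (hy' : ∀ t ∈ S, HasDerivWithinAt y' (y'' t) S t) (hy'' : ContinuousOn y'' S) :
    IsC2 k S (fun t => unweight k (y t)) (fun t => unweight k (y' t))
      fun t => unweight k (y'' t) where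
  mem0 t _ := by simp [w2_unweight]
  mem1 t _ := by simp [w2_unweight]
  mem2 t _ := by simp [w2_unweight]
  cont0 := contW_unweight fun t ht => (hy t ht).continuousWithinAt
  cont1 := contW_unweight fun t ht => (hy' t ht).continuousWithinAt
  cont2 := contW_unweight hy''
  hder1 := derivW_unweight hy
  hder2 := derivW_unweight hy'

end Weight

section BoundedOperators

variable {d k : ℕ}

/-- The operator `P` on functions on `ℤ^d` is bounded on `ℓ^{2,k}(ℤ^d)`, expressed through the
conjugated operator `T` on `ℓ²(ℤ^d)`. -/
def ActsBoundedly (k : ℕ) (P : ((Fin d → ℤ) → ℂ) → (Fin d → ℤ) → ℂ) : Prop :=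
  ∃ T : ℓ²(Fin d → ℤ, ℂ) →L[ℂ] ℓ²(Fin d → ℤ, ℂ), ∀ a, unweight k (T a) = P (unweight k a)

lemma actsBoundedly_of_schur {P : ((Fin d → ℤ) → ℂ) → (Fin d → ℤ) → ℂ}
    {K : (Fin d → ℤ) → (Fin d → ℤ) → ℂ} (hP : ∀ u m, P u m = ∑' n, K m n * u n)
    {α β : (Fin d → ℤ) → (Fin d → ℤ) → ℝ≥0} {A B : ℝ≥0}
    (hK : ∀ m n, (jap m ^ k) ^ 2 * ‖K m n‖ ^ 2 ≤ (jap n ^ k) ^ 2 * (α m n * β m n))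
    (hα : ∀ m, ∑' n, (α m n : ℝ≥0∞) ≤ A) (hβ : ∀ n, ∑' m, (β m n : ℝ≥0∞) ≤ B) :
    ActsBoundedly k P := by
  have hjap (m : Fin d → ℤ) : 0 < jap m ^ k := pow_pos (jap_pos m) k
  have hconj (m n) : ‖(jap m ^ k / jap n ^ k) • K m n‖₊ ^ 2 ≤ α m n * β m n := by
    rw [← NNReal.coe_le_coe]
    push_cast
    rw [norm_smul, Real.norm_of_nonneg (div_pos (hjap m) (hjap n)).le, mul_pow, div_pow,
      div_mul_eq_mul_div, div_le_iff₀' (pow_pos (hjap n) 2)]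
    exact hK m n
  obtain ⟨T, hT⟩ := exists_clm_of_schur hconj hα hβ
  refine ⟨T, fun a => funext fun m => ?_⟩
  rw [unweight_apply, hT, hP, ← tsum_const_smul'']
  congr! 2 with n
  rw [unweight_apply, smul_mul_assoc, mul_smul_comm, smul_smul, div_eq_mul_inv,
    inv_mul_cancel_left₀ (hjap m).ne']

lemma actsBoundedly_translation (k : ℕ) (e : Fin d → ℤ) :
    ActsBoundedly k fun u m => u (m + e) := by
  let C : ℝ≥0 := ((2 * jap (-e) ^ 2) ^ k).toNNReal
  have hC (m : Fin d → ℤ) : (jap m ^ k) ^ 2 ≤ (jap (m + e) ^ k) ^ 2 * C :=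
    calc (jap m ^ k) ^ 2 = (jap m ^ 2) ^ k := pow_right_comm _ _ _
      _ ≤ (2 * jap (-e) ^ 2 * jap (m + e) ^ 2) ^ k := by
          gcongr
          simpa using jap_sq_le_two_mul_mul m (m + e)
      _ = (jap (m + e) ^ k) ^ 2 * C := by
          rw [mul_pow, Real.coe_toNNReal _ (by positivity), mul_comm, pow_right_comm]
  refine actsBoundedly_of_schur (K := fun m n => if n = m + e then 1 else 0)
    (α := fun m n => if n = m + e then C else 0) (β := fun m n => if n - e = m then 1 else 0)
    (A := C) (B := 1) (fun u m => ?_) (fun m n => ?_) (fun m => ?_) fun n => ?_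
  · simp
  · rcases eq_or_ne n (m + e) with rfl | h
    · simpa using hC m
    · simp [h]
  · simp [apply_ite ((↑) : ℝ≥0 → ℝ≥0∞)]
  · simp [apply_ite ((↑) : ℝ≥0 → ℝ≥0∞)]

lemma actsBoundedly_lap (k : ℕ) : ActsBoundedly k (lap (d := d)) := by
  choose S hS using actsBoundedly_translation (d := d) k
  refine ⟨∑ j, (S (Pi.single j 1) + S (-Pi.single j 1) - (2 : ℂ) • .id ℂ _), fun a => ?_⟩
  ext m
  simp [lap, hS, sub_eq_add_neg, map_sum]

/-- The function `h` of one variable placed on the `j`-th coordinate axis of `ℤ^d` and extended by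
zero; the kernel of `∂ⱼ` has this form. -/
def onAxis {M : Type*} [Zero M] (j : Fin d) (h : ℤ → M) (q : Fin d → ℤ) : M :=
  if ∀ i, i ≠ j → q i = 0 then h (q j) else 0

lemma tsum_onAxis {M : Type*} [AddCommMonoid M] [TopologicalSpace M] (j : Fin d) (h : ℤ → M) :
    ∑' q, onAxis j h q = ∑' b, h b := by
  rw [← (Pi.single_injective (M := fun _ => ℤ) j).tsum_eq]
  · refine tsum_congr fun b => ?_
    simp +contextual [onAxis]
  · intro q hq
    have haxis : ∀ i, i ≠ j → q i = 0 := by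
      by_contra h
      exact hq (if_neg h)
    refine ⟨q j, funext fun i => ?_⟩
    rcases eq_or_ne i j with rfl | hi
    · simp
    · simp [hi, haxis i hi]

lemma coe_onAxis (j : Fin d) (h : ℤ → ℝ≥0) (q : Fin d → ℤ) :
    ((onAxis j h q : ℝ≥0) : ℝ≥0∞) = onAxis j (fun b => (h b : ℝ≥0∞)) q := by
  simp [onAxis, apply_ite ((↑) : ℝ≥0 → ℝ≥0∞)]

/-- The summable weight `⟨a⟩⁻²` on `ℤ`. It bounds the kernel of `∂ⱼ`, and is what is gained by
dividing by the square of the weight of `ℓ^{2,1}`. -/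
def invOneAddSq (a : ℤ) : ℝ≥0 :=
  (1 + ‖a‖₊ ^ 2)⁻¹

lemma coe_invOneAddSq (a : ℤ) : (invOneAddSq a : ℝ) = (1 + (a : ℝ) ^ 2)⁻¹ := by
  simp [invOneAddSq, ← Int.norm_cast_real]

lemma tsum_invOneAddSq_ne_top : ∑' a, (invOneAddSq a : ℝ≥0∞) ≠ ⊤ := by
  rw [ENNReal.tsum_coe_ne_top_iff_summable, ← NNReal.summable_coe]
  refine (Real.summable_one_div_int_pow.2 one_lt_two).of_norm_bounded_eventually ?_
  filter_upwards [(Set.finite_singleton (0 : ℤ)).compl_mem_cofinite] with a ha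
  have ha : a ≠ 0 := ha
  rw [coe_invOneAddSq, Real.norm_of_nonneg (by positivity), one_div]
  gcongr
  linarith

lemma one_add_sq_le_norm_four_mul_sq_sub_one (a : ℤ) :
    1 + (a : ℝ) ^ 2 ≤ ‖(4 * a ^ 2 - 1 : ℂ)‖ := by
  rcases eq_or_ne a 0 with rfl | ha
  · simp
  · have hsq : 1 ≤ (a : ℝ) ^ 2 := by
      exact_mod_cast (one_le_sq_iff_one_le_abs a).2 (Int.one_le_abs ha)
    calc 1 + (a : ℝ) ^ 2 ≤ ‖(4 * a ^ 2 : ℂ)‖ - ‖(1 : ℂ)‖ := by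
          simp only [norm_mul, norm_pow, Complex.norm_intCast, sq_abs, norm_one,
            RCLike.norm_ofNat]
          linarith
      _ ≤ ‖(4 * a ^ 2 - 1 : ℂ)‖ := norm_sub_norm_le _ _

lemma norm_phi_le (j : Fin d) (q : Fin d → ℤ) :
    ‖phi d j q‖ ≤ onAxis j (fun b => 2 * (invOneAddSq b : ℝ)) q := by
  rw [phi, onAxis]
  split_ifs
  · have hdenom := one_add_sq_le_norm_four_mul_sq_sub_one (q j)
    have hpos : 0 < 1 + (q j : ℝ) ^ 2 := by positivity
    simp only [norm_div, norm_mul, norm_neg, Complex.norm_I, Complex.norm_real,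
      Real.norm_of_nonneg Real.pi_pos.le, RCLike.norm_ofNat, coe_invOneAddSq, ← div_eq_mul_inv]
    rw [div_le_div_iff₀ (mul_pos Real.pi_pos (hpos.trans_le hdenom)) hpos]
    nlinarith [Real.pi_gt_three]
  · simp

lemma jap_pow_sq_mul_invOneAddSq_le (hk : k ≤ 1) {j : Fin d} {m n : Fin d → ℤ}
    (hmn : ∀ i, i ≠ j → (m - n) i = 0) :
    (jap m ^ k) ^ 2 * (invOneAddSq ((m - n) j) : ℝ) ≤
      2 * (jap n ^ k) ^ 2 * (invOneAddSq ((m - n) j) + invOneAddSq (n j)) := by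
  set p : ℝ := (invOneAddSq ((m - n) j) : ℝ) with hp
  set p' : ℝ := (invOneAddSq (n j) : ℝ) with hp'
  have hp0 : 0 ≤ p := NNReal.coe_nonneg _
  have hp'0 : 0 ≤ p' := NNReal.coe_nonneg _
  interval_cases k
  · linarith [hp0, hp'0]
  · have haxis : jap (m - n) ^ 2 * p = 1 := by
      rw [jap_sq, hp, coe_invOneAddSq, Finset.sum_eq_single_of_mem j (Finset.mem_univ j)
        fun i _ hi => by simp [hmn i hi]]
      exact mul_inv_cancel₀ (by positivity)
    have hgain : 1 ≤ jap n ^ 2 * p' := by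
      rw [hp', coe_invOneAddSq, ← div_eq_mul_inv, one_le_div (by positivity)]
      exact one_add_sq_le_jap_sq n j
    calc (jap m ^ 1) ^ 2 * p ≤ 2 * (jap n ^ 2 + jap (m - n) ^ 2 - 1) * p := by
          rw [pow_one]; gcongr; exact jap_sq_le_two_mul_add m n
      _ ≤ 2 * (jap n ^ 2 * p + jap n ^ 2 * p') := by linarith
      _ = 2 * (jap n ^ 1) ^ 2 * (p + p') := by ring

theorem actsBoundedly_pd (hk : k ≤ 1) (j : Fin d) : ActsBoundedly k (pd j) := by
  set A : ℝ≥0 := (∑' a, (invOneAddSq a : ℝ≥0∞)).toNNReal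
  have hA : ∑' a, (invOneAddSq a : ℝ≥0∞) = A := (ENNReal.coe_toNNReal tsum_invOneAddSq_ne_top).symm
  -- For `k = 1` the conjugated kernel decays only like `1/a` off the diagonal, so its rows are not
  -- summable; the factor `α` of its square gains the summable term `⟨n j⟩⁻²` from the weight.
  refine actsBoundedly_of_schur (K := fun m n => phi d j (m - n)) (A := A + A) (B := 8 * A)
    (α := fun m n => onAxis j (fun b => invOneAddSq b + invOneAddSq (m j - b)) (m - n))
    (β := fun m n => onAxis j (fun b => 8 * invOneAddSq b) (m - n))
    (fun u m => ?_) (fun m n => ?_) (fun m => ?_) fun n => ?_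
  · exact tsum_congr fun n => mul_comm _ _
  · by_cases hmn : ∀ i, i ≠ j → (m - n) i = 0
    · have hphi : ‖phi d j (m - n)‖ ≤ 2 * invOneAddSq ((m - n) j) :=
        (norm_phi_le j _).trans_eq (if_pos hmn)
      have hnj : m j - (m - n) j = n j := by simp
      simp only [onAxis, if_pos hmn, hnj]
      set p : ℝ≥0 := invOneAddSq ((m - n) j)
      calc (jap m ^ k) ^ 2 * ‖phi d j (m - n)‖ ^ 2
            ≤ (jap m ^ k) ^ 2 * (2 * p) ^ 2 := by gcongr
        _ = (jap m ^ k) ^ 2 * p * (4 * p) := by ring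
        _ ≤ 2 * (jap n ^ k) ^ 2 * (p + invOneAddSq (n j)) * (4 * p) := by
            exact mul_le_mul_of_nonneg_right (jap_pow_sq_mul_invOneAddSq_le hk hmn) (by positivity)
        _ = _ := by push_cast; ring
    · rw [phi, onAxis, onAxis, if_neg hmn, if_neg hmn, if_neg hmn]
      simp
  · simp_rw [coe_onAxis, ENNReal.coe_add]
    refine (((Equiv.subLeft m).tsum_eq (onAxis j _)).trans (tsum_onAxis j _)).trans_le ?_
    rw [ENNReal.tsum_add, ← hA]
    exact (congrArg _ ((Equiv.subLeft (m j)).tsum_eq fun b => (invOneAddSq b : ℝ≥0∞))).le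
  · simp_rw [coe_onAxis, ENNReal.coe_mul]
    refine (((Equiv.subRight n).tsum_eq (onAxis j _)).trans (tsum_onAxis j _)).trans_le ?_
    rw [ENNReal.tsum_mul_left, hA]

end BoundedOperators

/-! ### The semilinear wave equation -/

section Lipschitz

variable {d k : ℕ}

set_option synthInstance.maxHeartbeats 80000 in
-- The instances on `ℓ²` of the product `ℂ × (Fin (d + 1) → ℂ)` are slow to find.
lemma exists_state_clm (hk : k ≤ 1) :
    ∃ J : ℓ²(Fin d → ℤ, ℂ) × ℓ²(Fin d → ℤ, ℂ) →L[ℂ] ℓ²(Fin d → ℤ, ℂ × (Fin (d + 1) → ℂ)),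
      ∀ (x : ℝ → ℓ²(Fin d → ℤ, ℂ) × ℓ²(Fin d → ℤ, ℂ)) t m,
        state (fun s => unweight k (x s).1) (fun s => unweight k (x s).2) t m =
          (jap m ^ k)⁻¹ • J (x t) m := by
  choose D hD using fun j : Fin d => actsBoundedly_pd hk j
  obtain ⟨derivs, hderivs⟩ := exists_clm_lp_pi
    (Fin.cons (.snd ℂ _ _) fun j => D j ∘L .fst ℂ _ _ : Fin (d + 1) →
      ℓ²(Fin d → ℤ, ℂ) × ℓ²(Fin d → ℤ, ℂ) →L[ℂ] ℓ²(Fin d → ℤ, ℂ))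
  obtain ⟨J, hJ⟩ := exists_clm_lp_prodMk (.fst ℂ _ _) derivs
  refine ⟨J, fun x t m => ?_⟩
  rw [hJ]
  refine Prod.ext ?_ (funext <| Fin.cases ?_ fun i => ?_)
  · simp [state, unweight_apply]
  · simp [state, unweight_apply, hderivs]
  · simp [state, unweight_apply, hderivs, ← hD]

lemma lipschitzWith_smul_comp_inv_smul {E F : Type*} [NormedAddCommGroup E] [NormedSpace ℝ E]
    [NormedAddCommGroup F] [NormedSpace ℝ F] {Φ : E → F} {c : ℝ≥0} (hΦ : LipschitzWith c Φ)
    {r : ℝ} (hr : 0 < r) : LipschitzWith c fun v => r • Φ (r⁻¹ • v) := by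
  refine LipschitzWith.of_dist_le_mul fun v w => ?_
  have hvw := hΦ.dist_le_mul (r⁻¹ • v) (r⁻¹ • w)
  rw [dist_smul₀, Real.norm_of_nonneg (inv_pos.2 hr).le] at hvw
  rw [dist_smul₀, Real.norm_of_nonneg hr.le]
  calc r * dist (Φ (r⁻¹ • v)) (Φ (r⁻¹ • w)) ≤ r * (c * (r⁻¹ * dist v w)) := by gcongr
    _ = c * dist v w := by field_simp

lemma exists_lipschitz_acceleration (hk : k ≤ 1) {Φ : ℂ × (Fin (d + 1) → ℂ) → ℂ} {c : ℝ≥0}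
    (hΦ : LipschitzWith c Φ) (hΦ0 : Φ 0 = 0) :
    ∃ (A : ℓ²(Fin d → ℤ, ℂ) × ℓ²(Fin d → ℤ, ℂ) → ℓ²(Fin d → ℤ, ℂ)) (L : ℝ≥0),
      LipschitzWith L A ∧ A 0 = 0 ∧
      ∀ (x : ℝ → ℓ²(Fin d → ℤ, ℂ) × ℓ²(Fin d → ℤ, ℂ)) t m,
        unweight k (A (x t)) m = lap (unweight k (x t).1) m +
          Φ (state (fun s => unweight k (x s).1) (fun s => unweight k (x s).2) t m) := by
  have hjap (m : Fin d → ℤ) : 0 < jap m ^ k := pow_pos (jap_pos m) k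
  obtain ⟨Λ, hΛ⟩ := actsBoundedly_lap (d := d) k
  obtain ⟨J, hJ⟩ := exists_state_clm (d := d) hk
  obtain ⟨N, hNlip, hN⟩ := exists_lipschitzWith_lp_map (p := 2)
    (fun m : Fin d → ℤ => lipschitzWith_smul_comp_inv_smul hΦ (hjap m)) (by simp [hΦ0])
  refine ⟨fun x => Λ x.1 + N (J x), _,
    (Λ.lipschitz.comp LipschitzWith.prod_fst).add (hNlip.comp J.lipschitz), ?_, fun x t m => ?_⟩
  · ext m
    simp [hN, hΦ0]
  · rw [map_add, Pi.add_apply, hΛ, unweight_apply, hN, inv_smul_smul₀ (hjap m).ne', hJ]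

theorem exists_SLSol_of_lipschitzWith (hk : k ≤ 1) {Φ : ℂ × (Fin (d + 1) → ℂ) → ℂ} {c : ℝ≥0}
    (hΦ : LipschitzWith c Φ) (hΦ0 : Φ 0 = 0) :
    ∃ L > 0, ∃ M ≥ 0, ∀ (a b : ℓ²(Fin d → ℤ, ℂ)) (T : ℝ), 0 ≤ T → ∃ u u1 u2,
      SLSol d k Φ (unweight k a) (unweight k b) (Set.Icc 0 T) u u1 u2 ∧
      ∀ t ∈ Set.Icc 0 T, ∀ m, ‖state u u1 t m‖ ≤ M * (‖(a, b)‖ * Real.exp (L * T)) := by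
  obtain ⟨A, L₀, hA, hA0, hAeq⟩ := exists_lipschitz_acceleration (d := d) hk hΦ hΦ0
  obtain ⟨J, hJ⟩ := exists_state_clm (d := d) hk
  set L : ℝ≥0 := max 1 L₀
  have hG : LipschitzWith L fun x => (x.2, A x) := LipschitzWith.prod_snd.prodMk hA
  refine ⟨L, one_pos.trans_le (by simp [L]), ‖J‖, norm_nonneg J, fun a b T hT => ?_⟩
  obtain ⟨x, hx0, hx⟩ := exists_hasDerivWithinAt_Icc_of_lipschitz hG (a, b) hT
  have hderiv := fun t ht => (hx t ht).1
  have hcont : ContinuousOn x (Set.Icc 0 T) := fun t ht => (hderiv t ht).continuousWithinAt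
  refine ⟨fun t => unweight k (x t).1, fun t => unweight k (x t).2, fun t => unweight k (A (x t)),
    ⟨isC2_unweight (fun t ht => (hderiv t ht).fst) (fun t ht => (hderiv t ht).snd)
      (hA.continuous.comp_continuousOn hcont), fun t _ m => ?_, ?_, ?_⟩, fun t ht m => ?_⟩
  · exact sub_eq_iff_eq_add'.2 (hAeq x t m)
  · simp [hx0]
  · simp [hx0]
  · have hgrowth : ‖x t‖ ≤ ‖(a, b)‖ * Real.exp (L * T) :=
      calc ‖x t‖ ≤ ‖(a, b)‖ * Real.exp (L * t) := by
            simpa [hA0, gronwallBound_ε0] using (hx t ht).2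
        _ ≤ ‖(a, b)‖ * Real.exp (L * T) := by gcongr; exact ht.2
    calc ‖state (fun s => unweight k (x s).1) (fun s => unweight k (x s).2) t m‖
          = (jap m ^ k)⁻¹ * ‖J (x t) m‖ := by
            rw [hJ, norm_smul, Real.norm_of_nonneg (inv_pos.2 (pow_pos (jap_pos m) k)).le]
      _ ≤ ‖J (x t) m‖ := mul_le_of_le_one_left (norm_nonneg _)
            (inv_le_one_of_one_le₀ (one_le_pow₀ (one_le_jap m)))
      _ ≤ ‖J (x t)‖ := lp.norm_apply_le_norm two_ne_zero _ m
      _ ≤ ‖J‖ * (‖(a, b)‖ * Real.exp (L * T)) := J.le_opNorm_of_le hgrowth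

end Lipschitz

section LongTimeExistence

lemma SLSol.congr {d k : ℕ} {Φ F : ℂ × (Fin (d + 1) → ℂ) → ℂ} {f g : (Fin d → ℤ) → ℂ} {S : Set ℝ}
    {u u1 u2 : ℝ → (Fin d → ℤ) → ℂ} (hu : SLSol d k Φ f g S u u1 u2)
    (hΦF : ∀ t ∈ S, ∀ x, Φ (state u u1 t x) = F (state u u1 t x)) :
    SLSol d k F f g S u u1 u2 :=
  ⟨hu.1, fun t ht x => (hu.2.1 t ht x).trans (hΦF t ht x), hu.2.2⟩

lemma mul_exp_mul_le_sqrt {L ε T : ℝ} (hL : 0 < L) (hε : 0 < ε)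
    (hT : T ≤ (2 * L)⁻¹ * Real.log (1 / ε)) : ε * Real.exp (L * T) ≤ √ε :=
  calc ε * Real.exp (L * T) ≤ ε * Real.exp (L * ((2 * L)⁻¹ * Real.log (1 / ε))) := by gcongr
    _ = ε * Real.exp (Real.log (1 / ε) / 2) := by congr 2; field_simp
    _ = ε / √ε := by
        rw [Real.exp_half, Real.exp_log (by positivity), one_div, Real.sqrt_inv, div_eq_mul_inv]
    _ = √ε := Real.div_sqrt

lemma sqrt_log_one_div_le_log {ε : ℝ} (hε : 0 < ε) (hε1 : ε ≤ Real.exp (-1)) :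
    √(Real.log (1 / ε)) ≤ Real.log (1 / ε) := by
  have hlog : 1 ≤ Real.log (1 / ε) := by
    rw [one_div, Real.log_inv, le_neg]
    exact (Real.log_le_iff_le_exp hε).2 hε1
  exact Real.sqrt_le_self_iff.2 (.inr hlog)

theorem stmt14_general {d k : ℕ} (hk : k ≤ 1) {F : ℂ × (Fin (d + 1) → ℂ) → ℂ} {c : ℝ≥0}
    {s : Set (ℂ × (Fin (d + 1) → ℂ))} (hs : s ∈ 𝓝 0) (hF : LipschitzOnWith c F s)
    (hF0 : F 0 = 0) :
    ∃ K > 0, ∀ f g : (Fin d → ℤ) → ℂ, w2 k f < ⊤ → w2 k g < ⊤ →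
      ∃ δ > 0, ∀ ε : ℝ, 0 < ε → ε < δ → ∀ T : ℝ, 0 ≤ T → T ≤ K * Real.log (1 / ε) →
        ∃ u u1 u2, SLSol d k F (fun m => (ε : ℂ) * f m) (fun m => (ε : ℂ) * g m)
          (Set.Icc 0 T) u u1 u2 := by
  obtain ⟨Φ, hΦ, hFΦ⟩ := hF.extend_finite_dimension
  obtain ⟨r, hr, hrs⟩ := Metric.nhds_basis_closedBall.mem_iff.1 hs
  obtain ⟨L, hL, M, hM, hsol⟩ :=
    exists_SLSol_of_lipschitzWith hk hΦ ((hFΦ (mem_of_mem_nhds hs)).symm.trans hF0)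
  refine ⟨(2 * L)⁻¹, by positivity, fun f g hf hg => ?_⟩
  obtain ⟨a, rfl⟩ := exists_unweight_eq hf
  obtain ⟨b, rfl⟩ := exists_unweight_eq hg
  set B := M * ‖(a, b)‖
  have hB : 0 ≤ B := by positivity
  refine ⟨(r / (B + 1)) ^ 2, by positivity, fun ε hε hεδ T hT hTε => ?_⟩
  obtain ⟨u, u1, u2, hu, hstate⟩ := hsol ((ε : ℂ) • a) ((ε : ℂ) • b) T hT
  have hsmall : ∀ t ∈ Set.Icc 0 T, ∀ m, ‖state u u1 t m‖ ≤ r := fun t ht m =>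
    calc ‖state u u1 t m‖ ≤ M * (‖((ε : ℂ) • (a, b))‖ * Real.exp (L * T)) := hstate t ht m
      _ = B * (ε * Real.exp (L * T)) := by
          rw [norm_smul, Complex.norm_of_nonneg hε.le]; ring
      _ ≤ (B + 1) * (r / (B + 1)) := by
          gcongr
          · linarith
          · exact (mul_exp_mul_le_sqrt hL hε hTε).trans <|
              Real.sqrt_le_iff.2 ⟨by positivity, hεδ.le⟩
      _ = r := by field_simp
  rw [map_smul, map_smul] at hu
  exact ⟨u, u1, u2, hu.congr fun t ht m =>
    (hFΦ (hrs (mem_closedBall_zero_iff.2 (hsmall t ht m)))).symm⟩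

end LongTimeExistence

/-- long-time existence for the semilinear discrete wave equation
`∂ₜ²u - Δu = F(u,u')` with small data `εf, εg`: the maximal existence time satisfies
`T*(ε) ≥ K·√(log(1/ε))`, i.e. a classical solution exists on `[0,T]` for every
`T < K·√(log(1/ε))`. -/
theorem stmt14 (d : ℕ) (hd : 0 < d) (k : ℕ) (hk : k = 0 ∨ k = 1)
    (F : ℂ × (Fin (d + 1) → ℂ) → ℂ) (hF : ContDiff ℝ 1 F) (hF0 : F (0, 0) = 0)
    (f g : (Fin d → ℤ) → ℂ) (hf : w2 k f < ⊤) (hg : w2 k g < ⊤) :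
    ∃ δ : ℝ, 0 < δ ∧ ∃ K : ℝ, 0 < K ∧
      ∀ ε : ℝ, 0 < ε → ε < δ →
        ∀ T : ℝ, 0 < T → T < K * Real.sqrt (Real.log (1 / ε)) →
          ∃ u u1 u2,
            SLSol d k F (fun m => (ε : ℂ) * f m) (fun m => (ε : ℂ) * g m)
              (Set.Icc 0 T) u u1 u2 := by
  obtain ⟨c, s, hs, hFs⟩ := (hF.contDiffAt (x := 0)).exists_lipschitzOnWith
  obtain ⟨K, hK, hsol⟩ := stmt14_general (d := d) (k := k) (by lia) hs hFs hF0
  obtain ⟨δ, hδ, hδsol⟩ := hsol f g hf hg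
  refine ⟨min δ (Real.exp (-1)), by positivity, K, hK, fun ε hε hεδ T hT hTε => ?_⟩
  obtain ⟨hεδ, hε1⟩ := lt_min_iff.1 hεδ
  refine hδsol ε hε hεδ T hT.le (hTε.le.trans ?_)
  gcongr
  exact sqrt_log_one_div_le_log hε hε1.le
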